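/- Let L = {0, +, −, <, P} with P a unary relation symbol, and let M be the L-structure whose universe is the real numbers with the standard ordered additive group structure and with P interpreted as {2^k : k ∈ ℕ}. Then Th(M) does not have finite burden: for every n ∈ ℕ, M itself witnesses an inp-pattern of depth n in a single variable. -/

import Mathlib

/- Common model-theoretic definitions. -/

open FirstOrder Set

universe u v w

/-- An inp-pattern of depth `κ` in `nvars` free variables witnessed in the `L`-structure `N`:
formulas `φ α (x̄; ȳ_α)` (with `m α` parameter variables), positive integers `k α`, and
parameter tuples `b α i` such that each row is `k α`-inconsistent (no tuple of `N` realizes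
`φ α (x̄; b α i)` for `k α` distinct values of `i`), while every path is finitely consistent. -/
def IsInpPattern (L : FirstOrder.Language.{u, v}) (N : Type*) [L.Structure N]
    (κ : Type*) (nvars : ℕ) : Prop :=
  ∃ (m : κ → ℕ) (φ : ∀ α : κ, L.Formula (Fin nvars ⊕ Fin (m α)))
    (k : κ → ℕ) (b : ∀ α : κ, ℕ → Fin (m α) → N),
    (∀ α, 1 ≤ k α) ∧
    (∀ α : κ, ¬ ∃ (x : Fin nvars → N) (s : Finset ℕ),
        k α ≤ s.card ∧ ∀ i ∈ s, (φ α).Realize (Sum.elim x (b α i))) ∧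
    (∀ (η : κ → ℕ) (S : Finset κ), ∃ x : Fin nvars → N,
        ∀ α ∈ S, (φ α).Realize (Sum.elim x (b α (η α))))

/-- `Th(M)` has burden at least `n`: some model of `Th(M)` witnesses an inp-pattern of
depth `n` in a single variable. -/
def HasBurdenAtLeast (L : FirstOrder.Language.{u, v}) (M : Type w) [L.Structure M]
    (n : ℕ) : Prop :=
  ∃ N : FirstOrder.Language.Theory.ModelType.{u, v, max u v w} (L.completeTheory M),
    IsInpPattern L N (Fin n) 1

/-- `Th(M)` has finite burden: for some `n`, no model of `Th(M)` witnesses an inp-pattern of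
depth `n + 1` in a single variable. -/
def HasFiniteBurden (L : FirstOrder.Language.{u, v}) (M : Type w) [L.Structure M] : Prop :=
  ∃ n : ℕ, ¬ HasBurdenAtLeast L M (n + 1)

/-- `Th(M)` is strong: no model of `Th(M)` witnesses an inp-pattern of depth `ω` in any
finite tuple of variables. -/
def IsStrong (L : FirstOrder.Language.{u, v}) (M : Type w) [L.Structure M] : Prop :=
  ∀ (N : FirstOrder.Language.Theory.ModelType.{u, v, max u v w} (L.completeTheory M))
    (nvars : ℕ), ¬ IsInpPattern L N ℕ nvars

/-- A set `D` in a linear order is discrete if each of its points is isolated in it. -/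
def DiscreteIn {R : Type*} [LinearOrder R] (D : Set R) : Prop :=
  ∀ x ∈ D, ∃ a b : R, a < x ∧ x < b ∧ Set.Ioo a b ∩ D = {x}

/-- `M` is definably complete: every nonempty definable subset of `R` that is bounded above
has a least upper bound. -/
def DefinablyComplete (L : FirstOrder.Language.{u, v}) (R : Type w)
    [LinearOrder R] [L.Structure R] : Prop :=
  ∀ X : Set R, (Set.univ : Set R).Definable₁ L X → X.Nonempty → BddAbove X →
    ∃ a : R, IsLUB X a

/-- Function symbols of the language `{0, +, −, <, P}`: a constant `0`, unary `−`,
binary `+`. -/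
inductive OagPFunc : ℕ → Type
  | zero : OagPFunc 0
  | neg : OagPFunc 1
  | add : OagPFunc 2

/-- Relation symbols of the language `{0, +, −, <, P}`: binary `<` and unary `P`. -/
inductive OagPRel : ℕ → Type
  | lt : OagPRel 2
  | P : OagPRel 1

/-- The language `{0, +, −, <, P}` with `P` a unary relation symbol. -/
def LoagP : FirstOrder.Language := ⟨OagPFunc, OagPRel⟩

/-- The `{0, +, −, <, P}`-structure on `ℝ` with the standard ordered additive group
structure and `P` interpreted as `{2 ^ k : k ∈ ℕ}`. -/
instance : LoagP.Structure ℝ where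
  funMap {n} f v :=
    match f with
    | .zero => 0
    | .neg => -(v 0)
    | .add => v 0 + v 1
  RelMap {n} r v :=
    match r with
    | .lt => v 0 < v 1
    | .P => ∃ k : ℕ, v 0 = 2 ^ k

namespace InpAux

/-- The sum of a list of terms. -/
def sumTerm {α : Type} : List (LoagP.Term α) → LoagP.Term α
  | [] => FirstOrder.Language.Term.func OagPFunc.zero ![]
  | t :: l => FirstOrder.Language.Term.func OagPFunc.add ![t, sumTerm l]

theorem realize_sumTerm {α : Type} (v : α → ℝ) (l : List (LoagP.Term α)) :
    (sumTerm l).realize v = (l.map (fun t => t.realize v)).sum := by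
  induction l with
  | nil => rfl
  | cons t l ih =>
    rw [List.map_cons, List.sum_cons, ← ih]
    rfl

/-- `P(t)`. -/
def isPow {α : Type} (t : LoagP.Term α) : LoagP.Formula α :=
  FirstOrder.Language.Relations.formula (L := LoagP) (n := 1) OagPRel.P ![t]

theorem realize_isPow {α : Type} (v : α → ℝ) (t : LoagP.Term α) :
    (isPow t).Realize v ↔ ∃ k : ℕ, t.realize v = 2 ^ k := by
  exact FirstOrder.Language.Formula.realize_rel (L := LoagP) (R := (OagPRel.P : LoagP.Relations 1))

abbrev V (n : ℕ) := (Fin 1 ⊕ Fin 1) ⊕ Fin n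

/-- The matrix of the formula: the `p i` are distinct powers, one of them is the parameter, and
they sum up to `x`. -/
noncomputable def body (n : ℕ) : LoagP.Formula (V n) :=
  (FirstOrder.Language.BoundedFormula.iInf fun i : Fin n =>
      isPow (FirstOrder.Language.Term.var (Sum.inr i : V n))) ⊓
  ((FirstOrder.Language.BoundedFormula.iInf fun q : {q : Fin n × Fin n // q.1 ≠ q.2} =>
      ((FirstOrder.Language.Term.var (Sum.inr q.1.1 : V n)).equal
        (FirstOrder.Language.Term.var (Sum.inr q.1.2 : V n)) : LoagP.Formula (V n)).not) ⊓
  ((FirstOrder.Language.BoundedFormula.iSup fun i : Fin n =>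
      ((FirstOrder.Language.Term.var (Sum.inr i : V n)).equal
        (FirstOrder.Language.Term.var (Sum.inl (Sum.inr 0) : V n)) : LoagP.Formula (V n))) ⊓
  ((FirstOrder.Language.Term.var (Sum.inl (Sum.inl 0) : V n)).equal
    (sumTerm (List.ofFn fun i : Fin n => FirstOrder.Language.Term.var (Sum.inr i : V n))) :
      LoagP.Formula (V n))))

theorem realize_body (n : ℕ) (v : V n → ℝ) :
    (body n).Realize v ↔ (∀ i : Fin n, ∃ k : ℕ, v (Sum.inr i) = 2 ^ k) ∧
      (∀ i j : Fin n, i ≠ j → v (Sum.inr i) ≠ v (Sum.inr j)) ∧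
      (∃ i : Fin n, v (Sum.inr i) = v (Sum.inl (Sum.inr 0))) ∧
      v (Sum.inl (Sum.inl 0)) = ∑ i : Fin n, v (Sum.inr i) := by
  unfold body
  rw [FirstOrder.Language.Formula.realize_inf, FirstOrder.Language.Formula.realize_inf,
    FirstOrder.Language.Formula.realize_inf]
  refine and_congr ?_ (and_congr ?_ (and_congr ?_ ?_))
  · refine (FirstOrder.Language.BoundedFormula.realize_iInf).trans (forall_congr' fun i => ?_)
    exact realize_isPow v _
  · refine (FirstOrder.Language.BoundedFormula.realize_iInf).trans ?_
    constructor
    · intro h i j hij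
      have := h ⟨(i, j), hij⟩
      intro e
      apply this
      exact FirstOrder.Language.Formula.realize_equal.2 e
    · rintro h ⟨⟨i, j⟩, hij⟩ e
      exact h i j hij (FirstOrder.Language.Formula.realize_equal.1 e)
  · refine (FirstOrder.Language.BoundedFormula.realize_iSup).trans (exists_congr fun i => ?_)
    exact FirstOrder.Language.Formula.realize_equal
  · rw [FirstOrder.Language.Formula.realize_equal, realize_sumTerm, List.map_ofFn, List.sum_ofFn]
    rfl

/-- `x` is a sum of `n` distinct powers of two, one of which is the parameter. -/
noncomputable def phi (n : ℕ) : LoagP.Formula (Fin 1 ⊕ Fin 1) :=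
  FirstOrder.Language.Formula.iExs (Fin n) (body n)

theorem two_pow_inj {a b : ℕ} (h : (2 : ℝ) ^ a = 2 ^ b) : a = b :=
  pow_right_injective₀ (by norm_num) (by norm_num) h

theorem realize_phi (n : ℕ) (v : Fin 1 ⊕ Fin 1 → ℝ) :
    (phi n).Realize v ↔ ∃ T : Finset ℕ, T.card = n ∧ (∃ e ∈ T, (2 : ℝ) ^ e = v (Sum.inr 0)) ∧
      v (Sum.inl 0) = ∑ e ∈ T, (2 : ℝ) ^ e := by
  unfold phi
  rw [FirstOrder.Language.Formula.realize_iExs]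
  simp only [realize_body, Sum.elim_inr, Sum.elim_inl]
  constructor
  · rintro ⟨p, hp, hd, ⟨i, hi⟩, hs⟩
    choose e he using hp
    have inj : Function.Injective e := by
      intro i j hij
      by_contra hne
      exact hd i j hne (by rw [he, he, hij])
    refine ⟨Finset.univ.image e, ?_, ⟨e i, by simp, by rw [← he, hi]⟩, ?_⟩
    · rw [Finset.card_image_of_injective _ inj]; simp
    · rw [Finset.sum_image (fun a _ b _ h => inj h), hs]
      exact Finset.sum_congr rfl fun i _ => he i
  · rintro ⟨T, hT, ⟨e, heT, he⟩, hs⟩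
    let f := T.equivFinOfCardEq hT
    refine ⟨fun i => 2 ^ ((f.symm i : T) : ℕ), fun i => ⟨_, rfl⟩, ?_, ⟨f ⟨e, heT⟩, by simp [he]⟩, ?_⟩
    · intro i j hij h
      exact hij (f.symm.injective (Subtype.ext (two_pow_inj h)))
    · rw [hs, Equiv.sum_comp f.symm (fun t : T => (2 : ℝ) ^ (t : ℕ)),
        Finset.sum_coe_sort T (fun t => (2 : ℝ) ^ t)]

theorem sum_inj {S T : Finset ℕ} (h : ∑ e ∈ S, (2 : ℝ) ^ e = ∑ e ∈ T, (2 : ℝ) ^ e) : S = T := by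
  have h' : ∑ e ∈ S, 2 ^ e = ∑ e ∈ T, 2 ^ e := by exact_mod_cast h
  exact Finset.equivBitIndices.symm.injective h'

theorem enc_inj {n : ℕ} {a b : Fin n} {i j : ℕ} (h : n * i + a = n * j + b) : a = b ∧ i = j := by
  have hn : 0 < n := a.pos
  have h1 := congrArg (· % n) h
  have h2 := congrArg (· / n) h
  simp only [Nat.mul_add_mod, Nat.mod_eq_of_lt a.2, Nat.mod_eq_of_lt b.2] at h1
  simp only [Nat.mul_add_div hn, Nat.div_eq_of_lt a.2, Nat.div_eq_of_lt b.2] at h2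
  exact ⟨Fin.ext h1, by simpa using h2⟩

theorem pattern (n : ℕ) : IsInpPattern LoagP ℝ (Fin n) 1 := by
  refine ⟨fun _ => 1, fun _ => phi n, fun _ => n + 1, fun α i _ => 2 ^ (n * i + α),
    fun _ => Nat.succ_pos n, ?_, ?_⟩
  · rintro α ⟨x, s, hs, h⟩
    replace hs : n + 1 ≤ s.card := hs
    simp only [realize_phi, Sum.elim_inr, Sum.elim_inl] at h
    have hne : s.Nonempty := Finset.card_pos.1 (by omega)
    obtain ⟨i₀, hi₀⟩ := hne
    obtain ⟨T, hT, -, hx⟩ := h i₀ hi₀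
    have key : ∀ i ∈ s, n * i + α ∈ T := by
      intro i hi
      obtain ⟨T', -, ⟨e, he, he'⟩, hx'⟩ := h i hi
      have : T' = T := sum_inj (hx'.symm.trans hx)
      rw [← this, ← two_pow_inj he']
      exact he
    have := Finset.card_le_card_of_injOn (fun i => n * i + (α : ℕ)) key
      (fun i _ j _ hij => (enc_inj hij).2)
    omega
  · intro η S
    refine ⟨fun _ => ∑ α : Fin n, 2 ^ (n * η α + (α : ℕ)), fun α _ => ?_⟩
    have inj : Function.Injective (fun α : Fin n => n * η α + (α : ℕ)) :=
      fun a b hab => (enc_inj hab).1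
    rw [realize_phi]
    refine ⟨Finset.univ.image (fun α : Fin n => n * η α + (α : ℕ)), ?_,
      ⟨n * η α + α, by simp, rfl⟩, ?_⟩
    · rw [Finset.card_image_of_injective _ inj]; simp
    · rw [Finset.sum_image (fun a _ b _ h => inj h)]
      rfl

end InpAux

/-- The theory of `⟨ℝ; 0, +, −, <, {2^k : k ∈ ℕ}⟩` does not have finite
burden: for every `n`, the structure itself witnesses an inp-pattern of depth `n` in a
single variable. -/
theorem statement_3 :
    (∀ n : ℕ, IsInpPattern LoagP ℝ (Fin n) 1) ∧ ¬ HasFiniteBurden LoagP ℝ := by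
  refine ⟨InpAux.pattern, ?_⟩
  rintro ⟨n, hn⟩
  exact hn ⟨FirstOrder.Language.Theory.ModelType.of (LoagP.completeTheory ℝ) ℝ,
    InpAux.pattern (n + 1)⟩
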